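/- For all x, y ∈ Δ_Γ with y ≠ e and xy ≠ e, one has ‖ξ_{xy} − ξ_y‖₂² ≤ 2 · w(x)/w(y), where xy denotes the product in the group Δ_Γ (pointwise multiplication). -/

import Mathlib

open Function

/-- A proper length function on a group. -/
structure IsProperLength {G : Type*} [Group G] (l : G → ℝ) : Prop where
  nonneg : ∀ s, 0 ≤ l s
  eq_zero_iff : ∀ s, l s = 0 ↔ s = 1
  mul_le : ∀ s t, l (s * t) ≤ l s + l t
  inv_eq : ∀ s, l s⁻¹ = l s
  proper : ∀ R : ℝ, {s : G | l s ≤ R}.Finite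

open Classical in
/-- `w(y,t) = l_Γ(t) + l_Δ(y t)` if `t ∈ supp y`, and `0` otherwise. -/
noncomputable def wt {Γ Δ : Type*} [Group Δ] (lG : Γ → ℝ) (lD : Δ → ℝ)
    (y : Γ → Δ) (t : Γ) : ℝ :=
  if y t ≠ 1 then lG t + lD (y t) else 0

/-- `w(y) = Σ_t w(y,t)`. -/
noncomputable def w {Γ Δ : Type*} [Group Δ] (lG : Γ → ℝ) (lD : Δ → ℝ)
    (y : Γ → Δ) : ℝ :=
  ∑ᶠ t, wt lG lD y t

/-- The coefficients of the unit vector `ξ_y ∈ ℓ²(Γ)`: `ξ_y(t) = (w(y,t)/w(y))^{1/2}`. -/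
noncomputable def xi {Γ Δ : Type*} [Group Δ] (lG : Γ → ℝ) (lD : Δ → ℝ)
    (y : Γ → Δ) (t : Γ) : ℝ :=
  Real.sqrt (wt lG lD y t / w lG lD y)

theorem wt_nonneg_aux {Γ Δ : Type*} [Group Γ] [Group Δ]
    (lG : Γ → ℝ) (lD : Δ → ℝ) (hG : IsProperLength lG) (hD : IsProperLength lD)
    (y : Γ → Δ) (t : Γ) : 0 ≤ wt lG lD y t := by
  unfold wt
  have h1 := hG.nonneg t
  have h2 := hD.nonneg (y t)
  split_ifs <;> linarith

theorem wt_diff_aux {Γ Δ : Type*} [Group Γ] [Group Δ]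
    (lG : Γ → ℝ) (lD : Δ → ℝ) (hG : IsProperLength lG) (hD : IsProperLength lD)
    (x y : Γ → Δ) (t : Γ) : |wt lG lD (x * y) t - wt lG lD y t| ≤ wt lG lD x t := by
  unfold wt
  have h1 := hG.nonneg t
  have h2 := hD.nonneg (x t)
  have h3 := hD.mul_le (x t) (y t)
  have h4 := hD.mul_le (x t)⁻¹ (x t * y t)
  rw [hD.inv_eq, inv_mul_cancel_left] at h4
  have h0 : lD 1 = 0 := (hD.eq_zero_iff 1).2 rfl
  rw [Pi.mul_apply]
  by_cases hx : x t = 1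
  · rw [hx, one_mul, sub_self, abs_zero]
    simp
  · by_cases hy : y t = 1
    · simp [hx, hy, abs_of_nonneg (add_nonneg h1 h2)]
    · by_cases hxy : x t * y t = 1
      · have h5 := hD.nonneg (y t)
        rw [hxy, h0] at h4
        simp only [hx, hy, hxy, ne_eq, not_true_eq_false, not_false_eq_true, if_true, if_false]
        rw [abs_le]
        constructor <;> linarith
      · simp only [hx, hy, hxy, ne_eq, not_false_eq_true, if_true]
        rw [abs_le]
        constructor <;> linarith

theorem sqrt_diff_aux (p q : ℝ) (hp : 0 ≤ p) (hq : 0 ≤ q) :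
    (Real.sqrt p - Real.sqrt q) ^ 2 ≤ |p - q| := by
  have h1 := Real.sqrt_nonneg p
  have h2 := Real.sqrt_nonneg q
  have h3 := Real.sq_sqrt hp
  have h4 := Real.sq_sqrt hq
  rcases le_total (Real.sqrt p) (Real.sqrt q) with h | h
  · refine le_trans ?_ (neg_le_abs _)
    nlinarith
  · refine le_trans ?_ (le_abs_self _)
    nlinarith

theorem w_eq_aux {Γ Δ : Type*} [Group Γ] [Group Δ]
    (lG : Γ → ℝ) (lD : Δ → ℝ) (s : Finset Γ) (y : Γ → Δ)
    (h : ∀ t, t ∉ s → y t = 1) : w lG lD y = ∑ t ∈ s, wt lG lD y t := by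
  unfold w
  apply finsum_eq_sum_of_support_subset
  intro t ht
  by_contra hts
  exact ht (by simp [wt, h t hts])

theorem w_pos_aux {Γ Δ : Type*} [Group Γ] [Group Δ]
    (lG : Γ → ℝ) (lD : Δ → ℝ) (hG : IsProperLength lG) (hD : IsProperLength lD)
    (s : Finset Γ) (y : Γ → Δ) (h : ∀ t, t ∉ s → y t = 1) (hy : y ≠ 1) :
    0 < w lG lD y := by
  rw [w_eq_aux lG lD s y h]
  obtain ⟨t, ht⟩ := Function.ne_iff.1 hy
  have ht' : y t ≠ 1 := ht
  refine Finset.sum_pos' (fun i _ => wt_nonneg_aux lG lD hG hD y i) ⟨t, ?_, ?_⟩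
  · by_contra hts
    exact ht' (h t hts)
  · have h1 := hG.nonneg t
    have h2 : 0 < lD (y t) :=
      lt_of_le_of_ne (hD.nonneg _) (fun h => ht' ((hD.eq_zero_iff _).1 h.symm))
    simp only [wt, ht', ne_eq, not_false_eq_true, if_true]
    linarith

/-- For `x, y ∈ Δ_Γ` with `y ≠ e` and `xy ≠ e`,
`‖ξ_{xy} − ξ_y‖₂² ≤ 2 w(x)/w(y)`, where `xy` is the pointwise product in `Δ_Γ`. -/
theorem stmt2 {Γ Δ : Type*} [Group Γ] [Group Δ] [Countable Γ] [Countable Δ]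
    (lG : Γ → ℝ) (lD : Δ → ℝ) (hG : IsProperLength lG) (hD : IsProperLength lD)
    (x y : Γ → Δ) (hx : (mulSupport x).Finite) (hy : (mulSupport y).Finite)
    (hy1 : y ≠ 1) (hxy1 : x * y ≠ 1) :
    (∑' t : Γ, (xi lG lD (x * y) t - xi lG lD y t) ^ 2)
      ≤ 2 * w lG lD x / w lG lD y := by
  classical
  obtain ⟨s, hs⟩ : ∃ s : Finset Γ, ∀ t, t ∉ s → x t = 1 ∧ y t = 1 := by
    refine ⟨(hx.union hy).toFinset, fun t ht => ?_⟩
    simpa using ht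
  have hsx : ∀ t, t ∉ s → x t = 1 := fun t ht => (hs t ht).1
  have hsy : ∀ t, t ∉ s → y t = 1 := fun t ht => (hs t ht).2
  have hsxy : ∀ t, t ∉ s → (x * y) t = 1 := fun t ht => by
    simp [hsx t ht, hsy t ht]
  have hA := w_pos_aux lG lD hG hD s (x * y) hsxy hxy1
  have hB := w_pos_aux lG lD hG hD s y hsy hy1
  have hAe := w_eq_aux lG lD s (x * y) hsxy
  have hBe := w_eq_aux lG lD s y hsy
  have hCe := w_eq_aux lG lD s x hsx
  have hBA : |w lG lD y - w lG lD (x * y)| ≤ w lG lD x := by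
    rw [abs_sub_comm, hAe, hBe, hCe, ← Finset.sum_sub_distrib]
    exact (Finset.abs_sum_le_sum_abs _ _).trans
      (Finset.sum_le_sum fun t _ => wt_diff_aux lG lD hG hD x y t)
  rw [tsum_eq_sum (s := s) (fun t ht => by
    have h1 := hsxy t ht
    have h2 := hsy t ht
    simp [xi, wt, h1, h2])]
  set A := w lG lD (x * y) with hAd
  set B := w lG lD y with hBd
  set C := w lG lD x with hCd
  have key : ∀ t ∈ s, (xi lG lD (x * y) t - xi lG lD y t) ^ 2 ≤
      wt lG lD x t / B + wt lG lD (x * y) t * (C / (A * B)) := by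
    intro t _
    have ha := wt_nonneg_aux lG lD hG hD (x * y) t
    have hb := wt_nonneg_aux lG lD hG hD y t
    have hd := wt_diff_aux lG lD hG hD x y t
    unfold xi
    rw [← hAd, ← hBd]
    refine (sqrt_diff_aux _ _ (div_nonneg ha hA.le) (div_nonneg hb hB.le)).trans ?_
    have e : wt lG lD (x * y) t / A - wt lG lD y t / B =
        (wt lG lD (x * y) t - wt lG lD y t) / B
          + wt lG lD (x * y) t * ((B - A) / (A * B)) := by
      field_simp
      ring
    rw [e]
    refine (abs_add_le _ _).trans ?_
    rw [abs_div, abs_mul, abs_div, abs_of_pos hB, abs_of_pos (mul_pos hA hB), abs_of_nonneg ha]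
    have := mul_pos hA hB
    gcongr
  refine (Finset.sum_le_sum key).trans (le_of_eq ?_)
  rw [Finset.sum_add_distrib, ← Finset.sum_div, ← Finset.sum_mul, ← hAe, ← hCe]
  field_simp
  ring
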